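/- Let X be a complex Hilbert space, A a bounded linear operator on X, and 0 < ρ ≤ 1. Then w_ρ(A) ≥ (2/ρ − 1)·w₂(A), where w_s(A) := inf { u > 0 : (1/u)·A ∈ C_s } for s > 0. -/

import Mathlib

open ContinuousLinearMap

noncomputable section

/-- A unitary `ρ`-dilation of a single bounded operator `A` on a complex Hilbert space `X`:
a complex Hilbert space `Y`, a linear isometry `ι : X → Y`, and a unitary operator `U` on `Y`
such that `Aⁿ = ρ · ι* ∘ Uⁿ ∘ ι` for every integer `n ≥ 1`. -/
structure UnitaryRhoDilation1 (ρ : ℝ) (X : Type*) [NormedAddCommGroup X]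
    [InnerProductSpace ℂ X] [CompleteSpace X] (A : X →L[ℂ] X) where
  Y : Type
  [instN : NormedAddCommGroup Y]
  [instI : InnerProductSpace ℂ Y]
  [instC : CompleteSpace Y]
  ι : X →L[ℂ] Y
  isom : Isometry ι
  U : Y →L[ℂ] Y
  unit : U ∘L adjoint U = 1 ∧ adjoint U ∘L U = 1
  dil : ∀ n : ℕ, 1 ≤ n → A ^ n = (ρ : ℂ) • (adjoint ι ∘L ((U ^ n) ∘L ι))

/-- The class `C_ρ` of Sz.-Nagy and Foiaş: bounded operators admitting a unitary
`ρ`-dilation. -/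
def MemC1 (ρ : ℝ) {X : Type*} [NormedAddCommGroup X] [InnerProductSpace ℂ X]
    [CompleteSpace X] (A : X →L[ℂ] X) : Prop :=
  Nonempty (UnitaryRhoDilation1 ρ X A)

/-- The operator radius `w_ρ(A) = inf { u > 0 : (1/u)A ∈ C_ρ }`. -/
def wRad1 (ρ : ℝ) {X : Type*} [NormedAddCommGroup X] [InnerProductSpace ℂ X]
    [CompleteSpace X] (A : X →L[ℂ] X) : ℝ :=
  sInf {u : ℝ | 0 < u ∧ MemC1 ρ (((u : ℂ))⁻¹ • A)}


/-- Finitely supported functions with the semi-inner product of a positive kernel. -/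
structure PDKernel (X : Type) [NormedAddCommGroup X] [InnerProductSpace ℂ X]
    [CompleteSpace X] where
  K : ℤ → X →L[ℂ] X
  zero : K 0 = 1
  adj : ∀ n, adjoint (K n) = K (-n)
  pos : ∀ f : ℤ →₀ X, 0 ≤ (f.sum fun m x => f.sum fun n y => inner ℂ x (K (n - m) y)).re

def PDSpace {X : Type} [NormedAddCommGroup X] [InnerProductSpace ℂ X]
    [CompleteSpace X] (_ : PDKernel X) : Type := ℤ →₀ X

section GNS
variable {X : Type} [NormedAddCommGroup X] [InnerProductSpace ℂ X] [CompleteSpace X]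
  (k : PDKernel X)

instance : AddCommGroup (PDSpace k) := inferInstanceAs (AddCommGroup (ℤ →₀ X))
instance : Module ℂ (PDSpace k) := inferInstanceAs (Module ℂ (ℤ →₀ X))

def pdForm (f g : ℤ →₀ X) : ℂ := f.sum fun m x => g.sum fun n y => inner ℂ x (k.K (n - m) y)

lemma pdForm_symm (f g : ℤ →₀ X) : (starRingEnd ℂ) (pdForm k g f) = pdForm k f g := by
  unfold pdForm
  rw [Finsupp.sum_comm]
  simp only [map_finsuppSum]
  refine Finsupp.sum_congr fun m _ => Finsupp.sum_congr fun n _ => ?_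
  rw [inner_conj_symm, ← adjoint_inner_right, k.adj, neg_sub]

lemma pdForm_add (f g h : ℤ →₀ X) : pdForm k (f + g) h = pdForm k f h + pdForm k g h := by
  unfold pdForm
  rw [Finsupp.sum_add_index'] <;> simp [← Finsupp.sum_add, inner_add_left]

lemma pdForm_smul (f g : ℤ →₀ X) (c : ℂ) :
    pdForm k (c • f) g = (starRingEnd ℂ) c * pdForm k f g := by
  unfold pdForm
  rw [Finsupp.sum_smul_index' (by simp)]
  simp only [Finsupp.sum, Finset.mul_sum, inner_smul_left]

lemma pdForm_shift (a : ℤ) (f g : ℤ →₀ X) :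
    pdForm k (Finsupp.mapDomain (fun n => n + a) f) (Finsupp.mapDomain (fun n => n + a) g)
      = pdForm k f g := by
  unfold pdForm
  rw [Finsupp.sum_mapDomain_index]
  · congr! 3 with m x
    rw [Finsupp.sum_mapDomain_index]
    · simp
    · simp
    · simp [inner_add_right]
  · simp
  · simp [← Finsupp.sum_add, inner_add_left]

instance pdCore : PreInnerProductSpace.Core ℂ (PDSpace k) where
  inner f g := pdForm k f g
  conj_inner_symm f g := pdForm_symm k f g
  re_inner_nonneg f := k.pos f
  add_left f g h := pdForm_add k f g h
  smul_left f g c := pdForm_smul k f g c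

instance : SeminormedAddCommGroup (PDSpace k) :=
  InnerProductSpace.Core.toSeminormedAddCommGroup (𝕜 := ℂ)

instance : InnerProductSpace ℂ (PDSpace k) := .ofCore _

lemma pd_inner (f g : PDSpace k) : inner ℂ f g = pdForm k f g := rfl

def pdSingle (n : ℤ) : X →ₗ[ℂ] PDSpace k := (Finsupp.lsingle n : X →ₗ[ℂ] (ℤ →₀ X))

lemma pd_inner_single (m n : ℤ) (x y : X) :
    inner ℂ (pdSingle k m x) (pdSingle k n y) = inner ℂ x (k.K (n - m) y) := by
  rw [pd_inner]
  show pdForm k (Finsupp.single m x) (Finsupp.single n y) = _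
  simp [pdForm]

def pdShiftL (a : ℤ) : PDSpace k →ₗ[ℂ] PDSpace k :=
  (Finsupp.lmapDomain X ℂ (fun n : ℤ => n + a) : (ℤ →₀ X) →ₗ[ℂ] (ℤ →₀ X))

lemma pdShiftL_single (a n : ℤ) (x : X) :
    pdShiftL k a (pdSingle k n x) = pdSingle k (n + a) x := by
  exact Finsupp.mapDomain_single

lemma mapDomain_shift_comp (a b : ℤ) (f : ℤ →₀ X) :
    Finsupp.mapDomain (fun n => n + a) (Finsupp.mapDomain (fun n => n + b) f)
      = Finsupp.mapDomain (fun n => n + (b + a)) f := by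
  rw [← Finsupp.mapDomain_comp]
  congr 1
  funext n
  simp [add_assoc]

lemma mapDomain_shift_zero (f : ℤ →₀ X) : Finsupp.mapDomain (fun n => n + 0) f = f := by
  simp only [add_zero]
  exact Finsupp.mapDomain_id

lemma pdShiftL_comp (a b : ℤ) (f : PDSpace k) :
    pdShiftL k a (pdShiftL k b f) = pdShiftL k (b + a) f := mapDomain_shift_comp a b f

lemma pdShiftL_zero (f : PDSpace k) : pdShiftL k 0 f = f := mapDomain_shift_zero f

lemma pdShiftL_inner (a : ℤ) (f g : PDSpace k) :
    inner ℂ (pdShiftL k a f) (pdShiftL k a g) = inner ℂ f g := pdForm_shift k a f g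

lemma pdShiftL_norm (a : ℤ) (f : PDSpace k) : ‖pdShiftL k a f‖ = ‖f‖ := by
  have h := congrArg Complex.re (pdShiftL_inner k a f f)
  have h1 := norm_sq_eq_re_inner (𝕜 := ℂ) f
  have h2 := norm_sq_eq_re_inner (𝕜 := ℂ) (pdShiftL k a f)
  have : ‖pdShiftL k a f‖ ^ 2 = ‖f‖ ^ 2 := by rw [h1, h2]; exact h
  exact (sq_eq_sq₀ (norm_nonneg _) (norm_nonneg _)).1 this

def pdShift (a : ℤ) : PDSpace k →L[ℂ] PDSpace k :=
  (pdShiftL k a).mkContinuous 1 (fun f => by rw [pdShiftL_norm, one_mul])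

def pdU (a : ℤ) : UniformSpace.Completion (PDSpace k) →L[ℂ] UniformSpace.Completion (PDSpace k) :=
  (pdShift k a).completion

lemma pdU_coe (a : ℤ) (f : PDSpace k) : pdU k a (f : UniformSpace.Completion (PDSpace k))
    = ((pdShiftL k a f : PDSpace k) : UniformSpace.Completion (PDSpace k)) :=
  UniformSpace.Completion.map_coe (pdShift k a).uniformContinuous f

lemma pdU_comp (a b : ℤ) (y) : pdU k a (pdU k b y) = pdU k (b + a) y := by
  induction y using UniformSpace.Completion.induction_on with
  | hp => exact isClosed_eq (by fun_prop) (by fun_prop)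
  | ih f => simp [pdU_coe, pdShiftL_comp]

lemma pdU_zero (y) : pdU k 0 y = y := by
  induction y using UniformSpace.Completion.induction_on with
  | hp => exact isClosed_eq (by fun_prop) (by fun_prop)
  | ih f => simp [pdU_coe, pdShiftL_zero]

lemma pdU_norm (a : ℤ) (y) : ‖pdU k a y‖ = ‖y‖ := by
  induction y using UniformSpace.Completion.induction_on with
  | hp => exact isClosed_eq (by fun_prop) (by fun_prop)
  | ih f => simp [pdU_coe, pdShiftL_norm]

lemma pdU_adj (a : ℤ) : adjoint (pdU k a) ∘L pdU k a = 1 :=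
  (norm_map_iff_adjoint_comp_self _).1 (pdU_norm k a)

lemma pdU_adj_eq (a : ℤ) : adjoint (pdU k a) = pdU k (-a) := by
  have h1 : pdU k a ∘L pdU k (-a) = 1 := by
    ext y; simp [pdU_comp, pdU_zero]
  exact left_inv_eq_right_inv (a := pdU k a) (pdU_adj k a) h1

def pdIotaL : X →ₗ[ℂ] UniformSpace.Completion (PDSpace k) :=
  (UniformSpace.Completion.toComplL (𝕜 := ℂ) (E := PDSpace k)).toLinearMap ∘ₗ pdSingle k 0

lemma pdIotaL_norm (x : X) : ‖pdIotaL k x‖ = ‖x‖ := by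
  have h2 : ‖pdIotaL k x‖ = ‖pdSingle k 0 x‖ := UniformSpace.Completion.norm_coe _
  rw [h2]
  have h := pd_inner_single k 0 0 x x
  rw [sub_zero, k.zero] at h
  have h := congrArg Complex.re h
  have h1 := norm_sq_eq_re_inner (𝕜 := ℂ) (pdSingle k 0 x)
  have h3 := norm_sq_eq_re_inner (𝕜 := ℂ) x
  have : ‖pdSingle k 0 x‖ ^ 2 = ‖x‖ ^ 2 := by rw [h1, h3]; exact h
  exact (sq_eq_sq₀ (norm_nonneg _) (norm_nonneg _)).1 this

def pdIota : X →L[ℂ] UniformSpace.Completion (PDSpace k) :=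
  (pdIotaL k).mkContinuous 1 (fun f => by rw [pdIotaL_norm, one_mul])

lemma pdU_pow (n : ℕ) (x : X) : (pdU k 1 ^ n) (pdIota k x)
    = ((pdSingle k n x : PDSpace k) : UniformSpace.Completion (PDSpace k)) := by
  induction n with
  | zero => rfl
  | succ n ih =>
    rw [pow_succ', mul_apply_eq_comp, ih, pdU_coe, pdShiftL_single]
    push_cast; rfl

lemma pd_dil (n : ℕ) : adjoint (pdIota k) ∘L ((pdU k 1 ^ n) ∘L pdIota k) = k.K n := by
  ext y
  refine ext_inner_left ℂ fun x => ?_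
  rw [comp_apply, comp_apply, adjoint_inner_right, pdU_pow]
  have : pdIota k x = ((pdSingle k 0 x : PDSpace k) : UniformSpace.Completion (PDSpace k)) := rfl
  rw [this, UniformSpace.Completion.inner_coe, pd_inner_single, sub_zero]

end GNS

section Kernel
variable {X : Type} [NormedAddCommGroup X] [InnerProductSpace ℂ X] [CompleteSpace X]

def rhoK (ρ : ℝ) (T : X →L[ℂ] X) (n : ℤ) : X →L[ℂ] X :=
  if n = 0 then 1 else if 0 < n then ((ρ : ℂ)⁻¹) • T ^ n.toNat
    else adjoint (((ρ : ℂ)⁻¹) • T ^ (-n).toNat)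

lemma rhoK_zero (ρ : ℝ) (T : X →L[ℂ] X) : rhoK ρ T 0 = 1 := by simp [rhoK]

lemma rhoK_pos (ρ : ℝ) (T : X →L[ℂ] X) (n : ℤ) (hn : 0 < n) :
    rhoK ρ T n = ((ρ : ℂ)⁻¹) • T ^ n.toNat := by
  simp [rhoK, hn, hn.ne']

lemma rhoK_adj (ρ : ℝ) (T : X →L[ℂ] X) (n : ℤ) : adjoint (rhoK ρ T n) = rhoK ρ T (-n) := by
  rcases lt_trichotomy n 0 with h | h | h
  · have h1 : n ≠ 0 := h.ne
    have h2 : ¬ 0 < n := by omega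
    have h3 : 0 < -n := by omega
    rw [rhoK_pos ρ T (-n) h3]
    simp only [rhoK, h1, h2, if_false, adjoint_adjoint]
  · subst h
    simp only [neg_zero, rhoK_zero]
    exact star_one _
  · rw [rhoK_pos ρ T n h]
    have h1 : -n ≠ 0 := by omega
    have h2 : ¬ 0 < -n := by omega
    simp only [rhoK, h1, h2, if_false, neg_neg]

/-- Resolvent recursion. -/
def recK (T : X →L[ℂ] X) (h : ℕ → X) : ℕ → X
  | 0 => 0
  | n + 1 => T (recK T h n) + h n

lemma T_recK (T : X →L[ℂ] X) (h : ℕ → X) (n : ℕ) :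
    T (recK T h n) = ∑ j ∈ Finset.range n, (T ^ (n - j)) (h j) := by
  induction n with
  | zero => simp [recK]
  | succ n ih =>
    rw [recK, ih, map_add, map_sum, Finset.sum_range_succ]
    congr 1
    · refine Finset.sum_congr rfl fun j hj => ?_
      have : n + 1 - j = (n - j) + 1 := by have := Finset.mem_range.1 hj; omega
      rw [this, pow_succ', mul_apply_eq_comp]
    · simp

lemma quad_range (ρ : ℝ) (T : X →L[ℂ] X) (h : ℕ → X) (N : ℕ) :
    (∑ i ∈ Finset.range N, ∑ j ∈ Finset.range N,
      inner ℂ (h i) (rhoK ρ T ((i : ℤ) - j) (h j))).re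
    = ∑ n ∈ Finset.range N, (‖h n‖ ^ 2 + 2 / ρ * (inner ℂ (h n) (T (recK T h n))).re) := by
  induction N with
  | zero => simp
  | succ N ih =>
    have e1 : ∑ i ∈ Finset.range (N + 1), ∑ j ∈ Finset.range (N + 1),
          inner ℂ (h i) (rhoK ρ T ((i : ℤ) - j) (h j))
        = ∑ i ∈ Finset.range N, ∑ j ∈ Finset.range N,
          inner ℂ (h i) (rhoK ρ T ((i : ℤ) - j) (h j))
          + ∑ i ∈ Finset.range N, inner ℂ (h i) (rhoK ρ T ((i : ℤ) - N) (h N))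
          + ∑ j ∈ Finset.range N, inner ℂ (h N) (rhoK ρ T ((N : ℤ) - j) (h j))
          + inner ℂ (h N) (h N) := by
      rw [Finset.sum_range_succ]
      simp only [Finset.sum_range_succ _ N, Finset.sum_add_distrib]
      simp only [sub_self, rhoK_zero, one_apply_eq_self]
      ring
    have e2 : ∑ j ∈ Finset.range N, inner ℂ (h N) (rhoK ρ T ((N : ℤ) - j) (h j))
        = (ρ : ℂ)⁻¹ * inner ℂ (h N) (T (recK T h N)) := by
      rw [T_recK, inner_sum, Finset.mul_sum]
      refine Finset.sum_congr rfl fun j hj => ?_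
      have hj := Finset.mem_range.1 hj
      rw [rhoK_pos _ _ _ (by omega), smul_apply, inner_smul_right]
      congr 4
      omega
    have e3 : ∑ i ∈ Finset.range N, inner ℂ (h i) (rhoK ρ T ((i : ℤ) - N) (h N))
        = (starRingEnd ℂ) (∑ j ∈ Finset.range N, inner ℂ (h N) (rhoK ρ T ((N : ℤ) - j) (h j))) := by
      rw [map_sum]
      refine Finset.sum_congr rfl fun j _ => ?_
      rw [inner_conj_symm, ← adjoint_inner_right, rhoK_adj, neg_sub]
    have e4 : (inner ℂ (h N) (h N)).re = ‖h N‖ ^ 2 := (norm_sq_eq_re_inner (𝕜 := ℂ) (h N)).symm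
    have e5 : ((ρ : ℂ)⁻¹ * inner ℂ (h N) (T (recK T h N))).re
        = ρ⁻¹ * (inner ℂ (h N) (T (recK T h N))).re := by
      rw [← Complex.ofReal_inv, Complex.re_ofReal_mul]
    rw [e1, Finset.sum_range_succ, ← ih, e3, e2]
    simp only [Complex.add_re, Complex.conj_re, e4, e5]
    ring

/-- Positivity condition on finite sequences. -/
def SeqPos (ρ : ℝ) (T : X →L[ℂ] X) : Prop :=
  ∀ (N : ℕ) (k : ℕ → X), k 0 = 0 → 0 ≤ ∑ n ∈ Finset.range N,
    (‖k (n + 1) - T (k n)‖ ^ 2 + 2 / ρ * (inner ℂ (k (n + 1) - T (k n)) (T (k n))).re)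

lemma kernel_pos (ρ : ℝ) (T : X →L[ℂ] X) (hT : SeqPos ρ T) (f : ℤ →₀ X) :
    0 ≤ (f.sum fun m x => f.sum fun n y => inner ℂ x (rhoK ρ T (n - m) y)).re := by
  set M : ℕ := ∑ n ∈ f.support, n.natAbs with hM
  let e : ℕ → ℤ := fun i => (M : ℤ) - i
  have he : Function.Injective e := fun i j hij => by simp only [e] at hij; omega
  have hs : f.support ⊆ (Finset.range (2 * M + 1)).image e := by
    intro n hn
    have h1 : n.natAbs ≤ M :=
      Finset.single_le_sum (f := fun n : ℤ => n.natAbs) (fun _ _ => Nat.zero_le _) hn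
    refine Finset.mem_image.2 ⟨((M : ℤ) - n).toNat, ?_, ?_⟩
    · rw [Finset.mem_range]; omega
    · simp only [e]; omega
  have key : (f.sum fun m x => f.sum fun n y => inner ℂ x (rhoK ρ T (n - m) y))
      = ∑ i ∈ Finset.range (2 * M + 1), ∑ j ∈ Finset.range (2 * M + 1),
        inner ℂ (f (e i)) (rhoK ρ T ((i : ℤ) - j) (f (e j))) := by
    rw [Finsupp.sum_of_support_subset f hs _ (by simp), Finset.sum_image he.injOn]
    refine Finset.sum_congr rfl fun i _ => ?_
    rw [Finsupp.sum_of_support_subset f hs _ (by simp), Finset.sum_image he.injOn]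
    refine Finset.sum_congr rfl fun j _ => ?_
    have : e j - e i = (i : ℤ) - j := by simp only [e]; omega
    rw [this]
  rw [key, quad_range ρ T (fun i => f (e i))]
  have := hT (2 * M + 1) (recK T (fun i => f (e i))) rfl
  simpa [recK] using this

end Kernel

section Cond
variable {X : Type*} [NormedAddCommGroup X] [InnerProductSpace ℂ X]

lemma avg_ineq (M : ℕ) [NeZero M] (T : X →L[ℂ] X) (hT : ∀ x, ‖inner ℂ x (T x)‖ ≤ ‖x‖ ^ 2)
    (k : ZMod M → X) :
    (∑ n, inner ℂ (k (n + 1)) (T (k n))).re ≤ ∑ n, ‖k n‖ ^ 2 := by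
  classical
  let ψ := ZMod.stdAddChar (N := M)
  have hψ : ψ.IsPrimitive := ZMod.isPrimitive_stdAddChar M
  let p : ZMod M → X := fun j => ∑ n, ψ (j * n) • k n
  have hconj : ∀ a, (starRingEnd ℂ) (ψ a) = ψ (-a) := fun a => by
    rw [AddChar.map_neg_eq_conj]
  have hn : ∀ a, ‖ψ a‖ = 1 := fun a => AddChar.norm_apply _ _
  have orth : ∀ b : ZMod M, ∑ j, ψ (j * b) = if b = 0 then (M : ℂ) else 0 := fun b => by
    have := AddChar.sum_mulShift b hψ
    simpa [ZMod.card] using this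
  have gen : ∀ (S : X →L[ℂ] X) (c : ZMod M), ∑ j, ψ (j * c) * inner ℂ (p j) (S (p j))
      = M * ∑ n, inner ℂ (k (n + c)) (S (k n)) := by
    intro S c
    have h1 : ∀ j, ψ (j * c) * inner ℂ (p j) (S (p j))
        = ∑ n, ∑ m, ψ (j * (n + c - m)) * inner ℂ (k m) (S (k n)) := by
      intro j
      simp only [p, map_sum, map_smul, sum_inner, inner_sum, inner_smul_left, inner_smul_right,
        hconj, Finset.mul_sum]
      refine Finset.sum_congr rfl fun n _ => Finset.sum_congr rfl fun m _ => ?_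
      have : j * (n + c - m) = j * c + (j * n + -(j * m)) := by ring
      rw [this, AddChar.map_add_eq_mul, AddChar.map_add_eq_mul]
      ring
    simp only [h1]
    rw [Finset.sum_comm, Finset.mul_sum]
    refine Finset.sum_congr rfl fun n _ => ?_
    rw [Finset.sum_comm]
    simp only [← Finset.sum_mul, orth]
    rw [Finset.sum_eq_single (n + c)]
    · simp
    · intro m _ hm
      rw [if_neg (fun h => hm (sub_eq_zero.1 h).symm), zero_mul]
    · simp
  have g1 := congrArg Complex.re (gen T 1)
  have g2 := congrArg Complex.re (gen (ContinuousLinearMap.id ℂ X) 0)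
  have hself : ∀ x : X, (inner ℂ x x).re = ‖x‖ ^ 2 := fun x =>
    (norm_sq_eq_re_inner (𝕜 := ℂ) x).symm
  have hre : ∀ z : ℂ, ((M : ℂ) * z).re = M * z.re := fun z => by simp
  simp only [mul_zero, AddChar.map_zero_eq_one, one_mul, add_zero, id_apply, Complex.re_sum,
    hself, hre, mul_one] at g1 g2
  have hM : (0 : ℝ) < M := by exact_mod_cast Nat.pos_of_ne_zero (NeZero.ne M)
  rw [Complex.re_sum]
  refine le_of_mul_le_mul_left ?_ hM
  rw [← g1, ← g2]
  refine Finset.sum_le_sum fun j _ => ?_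
  refine (Complex.re_le_norm _).trans ?_
  rw [norm_mul, hn, one_mul]
  exact hT _

lemma avg_seq (T : X →L[ℂ] X) (hT : ∀ x, ‖inner ℂ x (T x)‖ ≤ ‖x‖ ^ 2) (N : ℕ)
    (k : ℕ → X) (hk : k 0 = 0) :
    ∑ n ∈ Finset.range N, (inner ℂ (k (n + 1)) (T (k n))).re
      ≤ ∑ n ∈ Finset.range N, ‖k (n + 1)‖ ^ 2 := by
  let kk : ZMod (N + 1) → X := fun n => k (ZMod.val n)
  have h := avg_ineq (N + 1) T hT kk
  have e1 : (∑ n : ZMod (N + 1), inner ℂ (kk (n + 1)) (T (kk n)))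
      = ∑ n : Fin (N + 1), inner ℂ (k (n + 1 : Fin (N + 1)).val) (T (k n.val)) := rfl
  have e2 : (∑ n : ZMod (N + 1), ‖kk n‖ ^ 2) = ∑ n : Fin (N + 1), ‖k n.val‖ ^ 2 := rfl
  rw [e1, e2, Fin.sum_univ_castSucc, Fin.sum_univ_succ] at h
  rw [← Fin.sum_univ_eq_sum_range (fun n => (inner ℂ (k (n + 1)) (T (k n))).re),
    ← Fin.sum_univ_eq_sum_range (fun n => ‖k (n + 1)‖ ^ 2)]
  simpa [hk, Fin.val_add_one] using h

end Cond
section Cond2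
variable {X : Type} [NormedAddCommGroup X] [InnerProductSpace ℂ X]
lemma seqPos_two (T : X →L[ℂ] X) (hT : ∀ x, ‖inner ℂ x (T x)‖ ≤ ‖x‖ ^ 2) : SeqPos 2 T := by
  intro N k hk
  have h := avg_seq T hT N k hk
  rw [← sub_nonneg, ← Finset.sum_sub_distrib] at h
  refine h.trans_eq (Finset.sum_congr rfl fun n _ => ?_)
  have hself : ∀ x : X, ‖x‖ ^ 2 = (inner ℂ x x).re := fun x => norm_sq_eq_re_inner (𝕜 := ℂ) x
  have hs : (inner ℂ (T (k n)) (k (n + 1))).re = (inner ℂ (k (n + 1)) (T (k n))).re :=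
    inner_re_symm (𝕜 := ℂ) _ _
  simp only [hself, inner_sub_left, inner_sub_right, Complex.sub_re, hs]
  ring

lemma seqPos_small (ρ : ℝ) (hρ : 0 < ρ) (hρ1 : ρ ≤ 1) (T : X →L[ℂ] X)
    (hT : ∀ x, ‖T x‖ ≤ ρ / 4 * ‖x‖) : SeqPos ρ T := by
  intro N k hk
  have h1 : ∀ n, ‖k (n + 1)‖ ^ 2 / 2 - ‖k n‖ ^ 2 / 2
     ≤ (‖k (n + 1) - T (k n)‖ ^ 2 + 2 / ρ * (inner ℂ (k (n + 1) - T (k n)) (T (k n))).re) := by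
    intro n
    set a := k (n + 1)
    set b := T (k n)
    have hb : ‖b‖ ≤ ρ / 4 * ‖k n‖ := hT _
    have hself : ∀ x : X, (inner ℂ x x).re = ‖x‖ ^ 2 := fun x =>
      (norm_sq_eq_re_inner (𝕜 := ℂ) x).symm
    have hs : (inner ℂ b a).re = (inner ℂ a b).re := inner_re_symm (𝕜 := ℂ) _ _
    have hr : ‖a - b‖ ^ 2 = ‖a‖ ^ 2 - 2 * (inner ℂ a b).re + ‖b‖ ^ 2 :=
      norm_sub_sq (𝕜 := ℂ) a b
    have hcs : -(‖a‖ * ‖b‖) ≤ (inner ℂ a b).re :=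
      (abs_le.1 ((Complex.abs_re_le_norm _).trans (norm_inner_le_norm (𝕜 := ℂ) a b))).1
    rw [hr, inner_sub_left, Complex.sub_re, hself]
    obtain ⟨t, ht⟩ : ∃ t, t = 2 / ρ := ⟨_, rfl⟩
    have htρ : t * ρ = 2 := by rw [ht]; field_simp
    have ht2 : 2 ≤ t := by nlinarith
    rw [← ht]
    have hb0 := norm_nonneg b
    have ha0 := norm_nonneg a
    have hk0 := norm_nonneg (k n)
    have htb : t * ‖b‖ ≤ ‖k n‖ / 2 := by
      calc t * ‖b‖ ≤ t * (ρ / 4 * ‖k n‖) := by gcongr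
        _ = _ := by linear_combination (‖k n‖ / 4) * htρ
    have hbb : ‖b‖ ≤ ‖k n‖ / 4 := by nlinarith
    have c1 : (t - 2) * (-(‖a‖ * ‖b‖)) ≤ (t - 2) * (inner ℂ a b).re :=
      mul_le_mul_of_nonneg_left hcs (by linarith)
    have c2 : ‖a‖ * (t * ‖b‖) ≤ ‖a‖ * (‖k n‖ / 2) := mul_le_mul_of_nonneg_left htb ha0
    have c3 : (t * ‖b‖) * ‖b‖ ≤ (‖k n‖ / 2) * (‖k n‖ / 4) := by gcongr
    nlinarith [sq_nonneg (‖a‖ - ‖k n‖), mul_nonneg ha0 hb0, sq_nonneg ‖b‖]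
  calc (0:ℝ) ≤ ‖k N‖ ^ 2 / 2 - ‖k 0‖ ^ 2 / 2 := by rw [hk]; simp; positivity
    _ = ∑ n ∈ Finset.range N, (‖k (n + 1)‖ ^ 2 / 2 - ‖k n‖ ^ 2 / 2) :=
      (Finset.sum_range_sub (fun n => ‖k n‖ ^ 2 / 2) N).symm
    _ ≤ _ := Finset.sum_le_sum fun n _ => h1 n
end Cond2

section NumRad
variable {X : Type*} [NormedAddCommGroup X] [InnerProductSpace ℂ X] [CompleteSpace X]

lemma dil_ineq {ρ : ℝ} (hρ : 0 < ρ) {B : X →L[ℂ] X} (D : UnitaryRhoDilation1 ρ X B)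
    (h : X) (z : ℂ) (hz : ‖z‖ < 1) :
    0 ≤ (inner ℂ (h + ((2 / ρ - 1 : ℝ) : ℂ) • z • B h) (h - z • B h)).re := by
  obtain ⟨Y, ι, isom, U, unit, dil⟩ := D
  have hι : adjoint ι ∘L ι = 1 := (isometry_iff_adjoint_comp_self ι).1 isom
  have hU : ∀ y, ‖U y‖ = ‖y‖ := (norm_map_iff_adjoint_comp_self U).2 unit.2
  have hUn : ∀ (n : ℕ) y, ‖(U ^ n) y‖ = ‖y‖ := by
    intro n
    induction n with
    | zero => simp
    | succ n ih => intro y; rw [pow_succ', mul_apply_eq_comp, hU, ih]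
  have hsum : ∀ x : X, Summable fun n : ℕ => z ^ n • (U ^ n) (ι x) := by
    intro x
    refine Summable.of_norm_bounded
      ((summable_geometric_of_lt_one (norm_nonneg z) hz).mul_right ‖ι x‖) fun n => ?_
    rw [norm_smul, norm_pow, hUn]
  have hρc : (ρ : ℂ) ≠ 0 := by exact_mod_cast hρ.ne'
  have hdil : ∀ (n : ℕ) (x : X), adjoint ι ((U ^ (n + 1)) (ι x)) = (ρ : ℂ)⁻¹ • (B ^ (n + 1)) x := by
    intro n x
    rw [dil (n + 1) (by omega), smul_apply, smul_smul, inv_mul_cancel₀ hρc, one_smul]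
    rfl
  set g := h - z • B h with hg
  let w : ℕ → Y := fun n => z ^ n • (U ^ n) (ι g)
  have hw : Summable w := hsum g
  set v := ∑' n, w n with hv
  have hw0 : w 0 = ι g := by simp [w]
  have hUv : z • U v = ∑' n, w (n + 1) := by
    rw [hv, ContinuousLinearMap.map_tsum U hw, ← Summable.tsum_const_smul z (hw.mapL U)]
    congr 1
    funext n
    simp only [w, map_smul, smul_smul, pow_succ', mul_apply_eq_comp]
  have hv1 : v = ι g + z • U v := by
    rw [hUv, hv, hw.tsum_eq_zero_add, hw0]
  have ha : Summable fun n : ℕ => z ^ (n + 1) • (B ^ (n + 1)) h := by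
    have := (((summable_nat_add_iff 1).2 (hsum h)).mapL (adjoint ι)).const_smul (ρ : ℂ)
    refine this.congr fun n => ?_
    rw [map_smul, hdil, smul_comm, smul_smul (ρ : ℂ), mul_inv_cancel₀ hρc, one_smul]
  have hadj : ∀ x, adjoint ι (ι x) = x := fun x => by
    have := congrArg (fun S : X →L[ℂ] X => S x) hι
    simpa using this
  have hv2 : adjoint ι v = g + (ρ : ℂ)⁻¹ • z • B h := by
    rw [hv, ContinuousLinearMap.map_tsum _ hw, (hw.mapL (adjoint ι)).tsum_eq_zero_add, hw0, hadj]
    congr 1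
    have e : ∀ n, adjoint ι (w (n + 1)) = (ρ : ℂ)⁻¹ •
        (z ^ (n + 1) • (B ^ (n + 1)) h - z ^ (n + 1 + 1) • (B ^ (n + 1 + 1)) h) := by
      intro n
      simp only [w]
      rw [map_smul, hdil, smul_comm]
      congr 1
      rw [hg, map_sub, map_smul, smul_sub, smul_smul, ← pow_succ, pow_succ B (n + 1),
        mul_apply_eq_comp]
    simp only [e]
    have ha' := (summable_nat_add_iff 1).2 ha
    rw [Summable.tsum_const_smul _ (ha.sub ha'), ha.tsum_sub ha', ha.tsum_eq_zero_add]
    simp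
  have h1 : inner ℂ (h + ((2 / ρ - 1 : ℝ) : ℂ) • z • B h) g
      = inner ℂ ((2 : ℂ) • v - ι g) (ι g) := by
    rw [← adjoint_inner_left, map_sub, map_smul, hv2, hadj]
    congr 1
    rw [hg]
    push_cast
    module
  have h2 : (2 : ℂ) • v - ι g = v + z • U v := by
    rw [eq_sub_of_add_eq hv1.symm]; module
  have h3 : ι g = v - z • U v := eq_sub_of_add_eq hv1.symm
  rw [h1, h2, h3]
  have hself : ∀ x : Y, (inner ℂ x x).re = ‖x‖ ^ 2 := fun x =>
    (norm_sq_eq_re_inner (𝕜 := ℂ) x).symm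
  have hs : (inner ℂ (z • U v) v).re = (inner ℂ v (z • U v)).re :=
    inner_re_symm (𝕜 := ℂ) _ _
  simp only [inner_add_left, inner_sub_right, Complex.add_re, Complex.sub_re, hself, hs]
  rw [norm_smul, hU]
  have : (‖z‖ * ‖v‖) ^ 2 ≤ ‖v‖ ^ 2 := by
    apply pow_le_pow_left₀ (by positivity)
    exact mul_le_of_le_one_left (norm_nonneg _) hz.le
  linarith

lemma dil_numrad {ρ : ℝ} (hρ : 0 < ρ) (hρ1 : ρ ≤ 1) {B : X →L[ℂ] X}
    (D : UnitaryRhoDilation1 ρ X B) (h : X) :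
    (2 / ρ - 1) * ‖inner ℂ h (B h)‖ ≤ ‖h‖ ^ 2 := by
  obtain ⟨c, hc⟩ : ∃ c, c = 2 / ρ - 1 := ⟨_, rfl⟩
  have hc1 : 1 ≤ c := by
    rw [hc, le_sub_iff_add_le, le_div_iff₀ hρ]; linarith
  have key := dil_ineq hρ D h
  rw [← hc] at key ⊢
  set x := inner ℂ h (B h) with hx
  obtain ⟨ζ, hζ, hζx⟩ : ∃ ζ : ℂ, ‖ζ‖ = 1 ∧ ζ * x = (‖x‖ : ℂ) := by
    rcases eq_or_ne x 0 with h0 | h0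
    · exact ⟨1, by simp, by simp [h0]⟩
    · refine ⟨(‖x‖ : ℂ) / x, ?_, by field_simp⟩
      rw [norm_div, Complex.norm_real, norm_norm, div_self (norm_ne_zero_iff.2 h0)]
  have hcs : ‖x‖ ≤ ‖h‖ * ‖B h‖ := norm_inner_le_norm _ _
  have hr : ∀ r : ℝ, 0 ≤ r → r < 1 →
      0 ≤ ‖h‖ ^ 2 - (c - 1) * (r * ‖x‖) - c * r ^ 2 * ‖B h‖ ^ 2 := by
    intro r hr0 hr1
    have hz : ‖-(r : ℂ) * ζ‖ = r := by
      rw [norm_mul, hζ, norm_neg, Complex.norm_real, Real.norm_of_nonneg hr0, mul_one]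
    have k := key (-(r : ℂ) * ζ) (by rw [hz]; exact hr1)
    have hself : ∀ x : X, (inner ℂ x x).re = ‖x‖ ^ 2 := fun x =>
      (norm_sq_eq_re_inner (𝕜 := ℂ) x).symm
    have hs : (inner ℂ ((-(r : ℂ) * ζ) • B h) h).re = (inner ℂ h ((-(r : ℂ) * ζ) • B h)).re :=
      inner_re_symm (𝕜 := ℂ) _ _
    have hi : (inner ℂ h ((-(r : ℂ) * ζ) • B h)).re = - (r * ‖x‖) := by
      rw [inner_smul_right, ← hx, mul_assoc, hζx, ← Complex.ofReal_neg, ← Complex.ofReal_mul,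
        Complex.ofReal_re]
      ring
    simp only [inner_add_left, inner_sub_right, inner_smul_left _ _ (c : ℂ), Complex.conj_ofReal,
      Complex.add_re, Complex.sub_re, Complex.re_ofReal_mul, hself, hs, hi] at k
    rw [norm_smul, hz] at k
    linarith
  have hr2 : ∀ r : ℝ, 0 ≤ r → r < 1 → c * (r * ‖x‖) ≤ ‖h‖ ^ 2 := by
    intro r hr0 hr1
    have k := hr r hr0 hr1
    rcases eq_or_ne h 0 with h0 | h0
    · have : x = 0 := by rw [hx, h0, inner_zero_left]
      simp [this]
    have hH : 0 < ‖h‖ ^ 2 := by positivity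
    have k2 : 0 ≤ (‖h‖ ^ 2 - c * (r * ‖x‖)) * (‖h‖ ^ 2 + r * ‖x‖) := by
      have q : ‖x‖ ^ 2 ≤ ‖h‖ ^ 2 * ‖B h‖ ^ 2 := by
        rw [← mul_pow]; exact pow_le_pow_left₀ (norm_nonneg _) hcs 2
      have q2 : c * r ^ 2 * ‖x‖ ^ 2 ≤ c * r ^ 2 * (‖h‖ ^ 2 * ‖B h‖ ^ 2) :=
        mul_le_mul_of_nonneg_left q (by positivity)
      have k3 := mul_nonneg hH.le k
      nlinarith
    have hp : 0 < ‖h‖ ^ 2 + r * ‖x‖ := by positivity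
    have := nonneg_of_mul_nonneg_left k2 hp
    linarith
  have ht : Filter.Tendsto (fun r : ℝ => c * (r * ‖x‖)) (nhdsWithin 1 (Set.Iio 1))
      (nhds (c * (1 * ‖x‖))) :=
    (Continuous.tendsto (by fun_prop) 1).mono_left nhdsWithin_le_nhds
  rw [one_mul] at ht
  refine le_of_tendsto ht ?_
  filter_upwards [Ioo_mem_nhdsLT (show (0 : ℝ) < 1 by norm_num)] with r hr
  exact hr2 r hr.1.le hr.2

end NumRad

section Final

lemma memC1_of_seqPos {X : Type*} [NormedAddCommGroup X] [InnerProductSpace ℂ X]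
    [CompleteSpace X] {R : Type} [NormedAddCommGroup R] [InnerProductSpace ℂ R]
    [CompleteSpace R] (e : X ≃ₗᵢ[ℂ] R) {ρ : ℝ} (hρ : 0 < ρ) (T : X →L[ℂ] X) (S : R →L[ℂ] R)
    (hS : ∀ x, S (e x) = e (T x)) (hpos : SeqPos ρ S) : MemC1 ρ T := by
  let k : PDKernel R := ⟨rhoK ρ S, rhoK_zero ρ S, rhoK_adj ρ S, kernel_pos ρ S hpos⟩
  have hρc : (ρ : ℂ) ≠ 0 := by exact_mod_cast hρ.ne'
  have hSn : ∀ (n : ℕ) x, (S ^ n) (e x) = e ((T ^ n) x) := by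
    intro n
    induction n with
    | zero => simp
    | succ n ih => intro x; rw [pow_succ', mul_apply_eq_comp, ih, hS, pow_succ', mul_apply_eq_comp]
  refine ⟨⟨UniformSpace.Completion (PDSpace k),
    pdIota k ∘L (e.toContinuousLinearEquiv : X →L[ℂ] R), ?_, pdU k 1, ⟨?_, pdU_adj k 1⟩, ?_⟩⟩
  · refine AddMonoidHomClass.isometry_of_norm _ fun x => ?_
    exact (pdIotaL_norm k (e x)).trans (e.norm_map x)
  · rw [pdU_adj_eq]
    ext y
    simp [pdU_comp, pdU_zero]
  · intro n hn
    ext x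
    refine ext_inner_left ℂ fun y => ?_
    have hd := pd_dil k n
    have hk : k.K n = (ρ : ℂ)⁻¹ • S ^ n := by
      have := rhoK_pos ρ S (n : ℤ) (by omega)
      simpa using this
    have h1 : inner ℂ (pdIota k (e y)) ((pdU k 1 ^ n) (pdIota k (e x)))
        = (ρ : ℂ)⁻¹ * inner ℂ y ((T ^ n) x) := by
      rw [← adjoint_inner_right]
      have : adjoint (pdIota k) ((pdU k 1 ^ n) (pdIota k (e x))) = k.K n (e x) := by
        rw [← hd]; rfl
      rw [this, hk, smul_apply, inner_smul_right, hSn, e.inner_map_map]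
    rw [smul_apply, inner_smul_right, comp_apply, adjoint_inner_right]
    show _ = (ρ : ℂ) * inner ℂ (pdIota k (e y)) ((pdU k 1 ^ n) (pdIota k (e x)))
    rw [h1, mul_inv_cancel_left₀ hρc]

/-- The existence of a dilation shows that the space is isometric to one in the lowest universe. -/
lemma exists_small {X : Type*} [NormedAddCommGroup X] [InnerProductSpace ℂ X]
    [CompleteSpace X] {Y : Type} [NormedAddCommGroup Y] [InnerProductSpace ℂ Y]
    [CompleteSpace Y] (ι : X →L[ℂ] Y) (hι : Isometry ι) :
    ∃ (R : Submodule ℂ Y) (_ : CompleteSpace R), Nonempty (X ≃ₗᵢ[ℂ] R) := by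
  let j : X →ₗᵢ[ℂ] Y := ⟨ι.toLinearMap, fun x => (AddMonoidHomClass.isometry_iff_norm ι).1 hι x⟩
  let e := j.equivRange
  exact ⟨_, e.toIsometryEquiv.completeSpace_iff.1 inferInstance, ⟨e⟩⟩

lemma memC1_transfer {X : Type*} [NormedAddCommGroup X] [InnerProductSpace ℂ X]
    [CompleteSpace X] {σ ρ : ℝ} (hρ : 0 < ρ) {B : X →L[ℂ] X} (hB : MemC1 σ B) (T : X →L[ℂ] X)
    (H : ∀ (R : Type) [NormedAddCommGroup R] [InnerProductSpace ℂ R] (e : X ≃ₗᵢ[ℂ] R)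
      (S : R →L[ℂ] R), (∀ x, S (e x) = e (T x)) → SeqPos ρ S) : MemC1 ρ T := by
  obtain ⟨D⟩ := hB
  obtain ⟨Y, ι, isom, U, unit, dil⟩ := D
  obtain ⟨R, hR, ⟨e⟩⟩ := exists_small ι isom
  let S : R →L[ℂ] R := (e.toContinuousLinearEquiv : X →L[ℂ] R) ∘L T ∘L
    (e.symm.toContinuousLinearEquiv : R →L[ℂ] X)
  have hS : ∀ x, S (e x) = e (T x) := fun x => by simp [S]
  exact memC1_of_seqPos e hρ T S hS (H R e S hS)

end Final

/-- for `0 < ρ ≤ 1` one has `w_ρ(A) ≥ (2/ρ − 1)·w₂(A)`. -/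
theorem wRad1_lower_bound {X : Type*} [NormedAddCommGroup X] [InnerProductSpace ℂ X]
    [CompleteSpace X] (A : X →L[ℂ] X) (ρ : ℝ) (hρ0 : 0 < ρ) (hρ1 : ρ ≤ 1) :
    (2 / ρ - 1) * wRad1 2 A ≤ wRad1 ρ A := by
  have hc : 0 < 2 / ρ - 1 := by
    rw [sub_pos, lt_div_iff₀ hρ0]; linarith
  have hcc : ((2 / ρ - 1 : ℝ) : ℂ) ≠ 0 := by exact_mod_cast hc.ne'
  have bdd : ∀ s : ℝ, BddBelow {u : ℝ | 0 < u ∧ MemC1 s (((u : ℂ))⁻¹ • A)} :=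
    fun s => ⟨0, fun u hu => hu.1.le⟩
  rcases Set.eq_empty_or_nonempty {u : ℝ | 0 < u ∧ MemC1 ρ (((u : ℂ))⁻¹ • A)} with h0 | h0
  · have h2 : {u : ℝ | 0 < u ∧ MemC1 2 (((u : ℂ))⁻¹ • A)} = ∅ := by
      by_contra hne
      obtain ⟨u, hu, hm⟩ := Set.nonempty_iff_ne_empty.2 hne
      have hv : 0 < 4 / ρ * (‖A‖ + 1) := by positivity
      have : 4 / ρ * (‖A‖ + 1) ∈ {u : ℝ | 0 < u ∧ MemC1 ρ (((u : ℂ))⁻¹ • A)} := by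
        refine ⟨hv, memC1_transfer hρ0 hm _ fun R _ _ e S hS => seqPos_small ρ hρ0 hρ1 S ?_⟩
        intro y
        obtain ⟨x, rfl⟩ := e.surjective y
        rw [hS, e.norm_map, e.norm_map, smul_apply, norm_smul, norm_inv, Complex.norm_real,
          Real.norm_of_nonneg hv.le, inv_mul_le_iff₀ hv]
        calc ‖A x‖ ≤ ‖A‖ * ‖x‖ := A.le_opNorm x
          _ ≤ (‖A‖ + 1) * ‖x‖ := by gcongr; linarith
          _ = _ := by field_simp
      rw [h0] at this
      exact this
    unfold wRad1
    rw [h0, h2]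
    simp
  · refine le_csInf h0 ?_
    rintro u ⟨hu, hm⟩
    have hmem : u / (2 / ρ - 1) ∈ {u : ℝ | 0 < u ∧ MemC1 2 (((u : ℂ))⁻¹ • A)} := by
      refine ⟨div_pos hu hc, memC1_transfer two_pos hm _ fun R _ _ e S hS => seqPos_two S ?_⟩
      obtain ⟨D⟩ := hm
      intro y
      obtain ⟨x, rfl⟩ := e.surjective y
      have key := dil_numrad hρ0 hρ1 D x
      rw [hS, e.norm_map, e.inner_map_map]
      refine le_trans (le_of_eq ?_) key
      have : ((u / (2 / ρ - 1) : ℝ) : ℂ)⁻¹ • A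
          = ((2 / ρ - 1 : ℝ) : ℂ) • ((u : ℂ)⁻¹ • A) := by
        rw [smul_smul, Complex.ofReal_div, inv_div, div_eq_mul_inv]
      rw [this, smul_apply, inner_smul_right, norm_mul, Complex.norm_real,
        Real.norm_of_nonneg hc.le]
    have := csInf_le (bdd 2) hmem
    rw [le_div_iff₀ hc] at this
    rw [mul_comm]
    exact this
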